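/- For every β ∈ (0, π) there exist b > 0 and constants c > 0, C < ∞ such that the function w(z) = Σ_{k=0}^∞ e^{−(z/b − k)²} satisfies: the series converges locally uniformly on the half-strip Π_β = {x + iy : x > 0, |y| < β/2}, and for all z ∈ Π_β one has |w(z)| ≥ c and Σ_{k=0}^∞ |e^{−(z/b − k)²}| ≤ C. -/

import Mathlib

/-!
Write `z / b = s + i t`. The modulus of the `k`-th term is `exp (t² - (s - k)²)` and its argument is
`-2 t (s - k)`. Enlarging `b` makes `t` as small as desired on the whole half-strip, so near the
peak `k ≈ s` all terms are almost positive reals. Quantitatively, `cos x ≥ 1 - x² / 2` gives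
`Re (term) ≥ exp (-(s - k)²) - O(t²) exp (-(s - k)² / 2)` (`re_term_ge`). The first part sums to at
least `exp (-1)`, from the single index `k = ⌊s⌋`, which is available because `s > 0`; the second
part sums to `O(t²)` uniformly in `s`, because the sums `∑ exp (-(s - k)² / 2)` are bounded
uniformly in `s` (`exists_gaussian_sum_bound`). The same bound controls the absolute series,
and the Weierstrass test gives locally uniform convergence.
-/

/-- The half-strip `Π_β = {x + iy : x > 0, |y| < β/2}`. -/
def halfStrip (β : ℝ) : Set ℂ := {z : ℂ | 0 < z.re ∧ |z.im| < β / 2}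

/-- Sums of a Gaussian over a translate of `ℕ` are bounded uniformly in the translation. -/
lemma exists_gaussian_sum_bound : ∃ M : ℝ, 0 ≤ M ∧ ∀ s : ℝ,
    (Summable fun k : ℕ => Real.exp (-(s - k) ^ 2 / 2)) ∧
      ∑' k : ℕ, Real.exp (-(s - k) ^ 2 / 2) ≤ M := by
  have hg : Summable fun m : ℤ => Real.exp 1 * (4 * (1 / (m : ℝ) ^ 2) + if m = 0 then 1 else 0) := by
    refine (Summable.add ((Real.summable_one_div_int_pow.2 (by norm_num)).mul_left 4) ?_).mul_left _
    exact summable_of_ne_finset_zero (s := {0}) (by intro m hm; simp_all)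
  set g := fun m : ℤ => Real.exp 1 * (4 * (1 / (m : ℝ) ^ 2) + if m = 0 then (1 : ℝ) else 0) with hgdef
  have hg0 : ∀ m, 0 ≤ g m := by intro m; simp only [hgdef]; split_ifs <;> positivity
  have hexp : ∀ m : ℤ, Real.exp 1 * Real.exp (-(m : ℝ) ^ 2 / 4) ≤ g m := by
    intro m
    simp only [hgdef]
    refine mul_le_mul_of_nonneg_left ?_ (Real.exp_pos _).le
    split_ifs with h
    · simp [h]
    · have hm : (0 : ℝ) < (m : ℝ) ^ 2 := by positivity
      have h1 := Real.add_one_le_exp ((m : ℝ) ^ 2 / 4)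
      rw [neg_div, Real.exp_neg, inv_le_comm₀ (Real.exp_pos _) (by positivity)]
      refine le_trans (le_of_eq ?_) (by linarith : (m : ℝ) ^ 2 / 4 ≤ _)
      field_simp
      ring
  refine ⟨∑' m, g m, tsum_nonneg hg0, fun s => ?_⟩
  have hinj : Function.Injective fun k : ℕ => ⌊s⌋ - (k : ℤ) := by
    intro a b h; simpa using h
  have hle : ∀ k : ℕ, Real.exp (-(s - k) ^ 2 / 2) ≤ g (⌊s⌋ - (k : ℤ)) := by
    intro k
    refine le_trans ?_ (hexp _)
    rw [← Real.exp_add, Real.exp_le_exp]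
    push_cast
    have h1 := Int.floor_le s
    have h2 := Int.lt_floor_add_one s
    -- `(⌊s⌋ - k)² ≤ 2 (s - k)² + 2 (s - ⌊s⌋)²`
    nlinarith [sq_nonneg ((s - k) + (s - ⌊s⌋))]
  have hs : Summable fun k : ℕ => g (⌊s⌋ - (k : ℤ)) := hg.comp_injective hinj
  have hs' := Summable.of_nonneg_of_le (fun k : ℕ => (Real.exp_pos _).le) hle hs
  exact ⟨hs', (hs'.tsum_le_tsum hle hs).trans
    (tsum_comp_le_tsum_of_inj hg hg0 hinj)⟩

lemma norm_term (p : ℂ) : ‖Complex.exp (-p ^ 2)‖ = Real.exp (p.im ^ 2 - p.re ^ 2) := by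
  rw [Complex.norm_exp]
  congr 1
  simp [pow_two]

/-- Close to the real axis a complex Gaussian has nearly the real part of the real Gaussian. -/
lemma re_term_ge (p : ℂ) (h : p.im ^ 2 ≤ 1) :
    Real.exp (-p.re ^ 2) - 4 * Real.exp 1 * p.im ^ 2 * Real.exp (-p.re ^ 2 / 2) ≤
      (Complex.exp (-p ^ 2)).re := by
  rw [Complex.exp_re]
  have h1 : (-p ^ 2).re = p.im ^ 2 - p.re ^ 2 := by simp [pow_two]
  have h2 : (-p ^ 2).im = -(2 * p.re * p.im) := by simp [pow_two]; ring
  rw [h1, h2, Real.cos_neg]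
  have hc := Real.one_sub_sq_div_two_le_cos (x := 2 * p.re * p.im)
  set r := p.re
  set t := p.im
  have e1 : Real.exp (-r ^ 2) ≤ Real.exp (t ^ 2 - r ^ 2) :=
    Real.exp_le_exp.2 (by nlinarith [sq_nonneg t])
  have e2 : Real.exp (t ^ 2 - r ^ 2) * r ^ 2 ≤ 2 * Real.exp 1 * Real.exp (-r ^ 2 / 2) := by
    have := Real.add_one_le_exp (r ^ 2 / 2)
    calc Real.exp (t ^ 2 - r ^ 2) * r ^ 2
        ≤ Real.exp (1 - r ^ 2) * (2 * Real.exp (r ^ 2 / 2)) := by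
          refine mul_le_mul (Real.exp_le_exp.2 (by linarith)) (by linarith) (sq_nonneg _)
            (Real.exp_pos _).le
      _ = 2 * (Real.exp (1 - r ^ 2) * Real.exp (r ^ 2 / 2)) := by ring
      _ = 2 * (Real.exp 1 * Real.exp (-r ^ 2 / 2)) := by
          rw [← Real.exp_add, ← Real.exp_add]; ring_nf
      _ = _ := by ring
  have e3 := mul_le_mul_of_nonneg_left hc (Real.exp_pos (t ^ 2 - r ^ 2)).le
  have e4 := mul_le_mul_of_nonneg_left e2 (sq_nonneg t)
  nlinarith

/-- Analytic partition-of-unity generator: for suitable `b > 0` the Gaussian series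
`w(z) = Σ_k e^{-(z/b-k)²}` converges locally uniformly on the half-strip `Π_β`, is bounded
away from zero there, and the series converges absolutely with a uniform bound. -/
theorem gaussian_series_bounded_below (β : ℝ) (hβ0 : 0 < β) (hβ : β < Real.pi) :
    ∃ b > (0:ℝ), ∃ c > (0:ℝ), ∃ C : ℝ,
      TendstoLocallyUniformlyOn
        (fun n z => ∑ k ∈ Finset.range n, Complex.exp (-(z / (b:ℂ) - (k:ℂ))^2))
        (fun z => ∑' k : ℕ, Complex.exp (-(z / (b:ℂ) - (k:ℂ))^2))
        Filter.atTop (halfStrip β) ∧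
      ∀ z ∈ halfStrip β,
        c ≤ ‖∑' k : ℕ, Complex.exp (-(z / (b:ℂ) - (k:ℂ))^2)‖ ∧
        (Summable fun k : ℕ => ‖Complex.exp (-(z / (b:ℂ) - (k:ℂ))^2)‖) ∧
        (∑' k : ℕ, ‖Complex.exp (-(z / (b:ℂ) - (k:ℂ))^2)‖) ≤ C := by
  obtain ⟨M, hM0, hM⟩ := exists_gaussian_sum_bound
  -- `A` is chosen so that the total error `4 e t² M` below is at most `exp (-1) / 2`.
  set A : ℝ := 2 * Real.exp 1 ^ 2 * M + 1 with hA
  have hA1 : 1 ≤ A := by rw [hA]; linarith [show 0 ≤ 2 * Real.exp 1 ^ 2 * M by positivity]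
  have hA0 : 0 < A := by linarith
  have hb : 0 < β * A := by positivity
  have hre : ∀ (z : ℂ) (k : ℕ), (z / ((β * A : ℝ) : ℂ) - (k : ℂ)).re = z.re / (β * A) - k := by
    intro z k; rw [Complex.sub_re, Complex.div_ofReal_re, Complex.natCast_re]
  have him : ∀ (z : ℂ) (k : ℕ), (z / ((β * A : ℝ) : ℂ) - (k : ℂ)).im = z.im / (β * A) := by
    intro z k; rw [Complex.sub_im, Complex.div_ofReal_im, Complex.natCast_im, sub_zero]
  have ht : ∀ z ∈ halfStrip β, (z.im / (β * A)) ^ 2 ≤ 1 / (4 * A) := by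
    intro z hz
    have h1 : z.im ^ 2 ≤ (β / 2) ^ 2 := sq_le_sq' (abs_lt.1 hz.2).1.le (abs_lt.1 hz.2).2.le
    rw [div_pow, div_le_div_iff₀ (by positivity) (by positivity)]
    calc z.im ^ 2 * (4 * A) ≤ (β / 2) ^ 2 * (4 * A) := by gcongr
      _ = β ^ 2 * A * 1 := by ring
      _ ≤ β ^ 2 * A * A := by gcongr
      _ = _ := by ring
  have ht1 : ∀ z ∈ halfStrip β, (z.im / (β * A)) ^ 2 ≤ 1 := by
    intro z hz
    refine (ht z hz).trans ?_
    rw [div_le_one (by positivity)]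
    linarith
  refine ⟨β * A, hb, Real.exp (-1) / 2, by positivity, Real.exp 1 * M, ?_, ?_⟩
  · intro u hu x hx
    set R : ℝ := (x.re + 1) / (β * A)
    have hsum : Summable fun k : ℕ =>
        Real.exp (1 + R ^ 2) * Real.exp (-((0 : ℝ) - k) ^ 2 / 2) := (hM 0).1.mul_left _
    have key : TendstoUniformlyOn
        (fun n z => ∑ k ∈ Finset.range n, Complex.exp (-(z / ((β * A : ℝ):ℂ) - (k:ℂ))^2))
        (fun z => ∑' k : ℕ, Complex.exp (-(z / ((β * A : ℝ):ℂ) - (k:ℂ))^2))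
        Filter.atTop (halfStrip β ∩ {z | z.re < x.re + 1}) := by
      refine tendstoUniformlyOn_tsum_nat hsum ?_
      rintro k z ⟨hz, hzx⟩
      rw [norm_term, hre, him, ← Real.exp_add, Real.exp_le_exp]
      have h0 : 0 ≤ z.re / (β * A) := div_nonneg hz.1.le hb.le
      have h1 : z.re / (β * A) ≤ R := by
        have : z.re ≤ x.re + 1 := le_of_lt hzx
        simp only [R]; gcongr
      have h2 := ht1 z hz
      have h3 : (z.re / (β * A)) ^ 2 ≤ R ^ 2 := by gcongr
      -- `k² ≤ 2 (s - k)² + 2 s²`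
      nlinarith [sq_nonneg ((z.re / (β * A) - k) + z.re / (β * A))]
    refine ⟨_, Filter.inter_mem self_mem_nhdsWithin (mem_nhdsWithin_of_mem_nhds ?_), key u hu⟩
    exact (isOpen_lt Complex.continuous_re continuous_const).mem_nhds (by simp)
  · intro z hz
    set s := z.re / (β * A) with hs
    set t := z.im / (β * A) with htdef
    obtain ⟨hS, hSM⟩ := hM s
    have hS1 := hS.mul_left (Real.exp 1)
    have hle : ∀ k : ℕ, ‖Complex.exp (-(z / ((β * A : ℝ):ℂ) - (k:ℂ))^2)‖ ≤
        Real.exp 1 * Real.exp (-(s - k) ^ 2 / 2) := by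
      intro k
      rw [norm_term, hre, him, ← Real.exp_add, Real.exp_le_exp]
      nlinarith [ht1 z hz, sq_nonneg (s - k)]
    have hN := Summable.of_nonneg_of_le (fun k => norm_nonneg _) hle hS1
    refine ⟨?_, hN, ?_⟩
    · have hC := hN.of_norm
      refine le_trans ?_ (Complex.re_le_norm _)
      rw [Complex.re_tsum hC]
      have hG : Summable fun k : ℕ => Real.exp (-(s - k) ^ 2) :=
        Summable.of_nonneg_of_le (fun k => (Real.exp_pos _).le)
          (fun k => Real.exp_le_exp.2 (by nlinarith [sq_nonneg (s - k)])) hS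
      have hE := hS.mul_left (4 * Real.exp 1 * t ^ 2)
      have hlow : ∑' k : ℕ, (Real.exp (-(s - k) ^ 2) -
          4 * Real.exp 1 * t ^ 2 * Real.exp (-(s - k) ^ 2 / 2)) ≤
          ∑' k : ℕ, (Complex.exp (-(z / ((β * A : ℝ):ℂ) - (k:ℂ))^2)).re := by
        refine (hG.sub hE).tsum_le_tsum (fun k => ?_) (Complex.hasSum_re hC.hasSum).summable
        have := re_term_ge (z / ((β * A : ℝ):ℂ) - (k:ℂ)) (by rw [him]; exact ht1 z hz)
        rwa [hre, him] at this
      refine le_trans ?_ hlow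
      rw [hG.tsum_sub hE, tsum_mul_left]
      have hs0 : 0 ≤ s := div_nonneg hz.1.le hb.le
      have hpeak : Real.exp (-1) ≤ ∑' k : ℕ, Real.exp (-(s - k) ^ 2) := by
        refine le_trans (Real.exp_le_exp.2 ?_) (hG.le_tsum ⌊s⌋₊ fun k _ => (Real.exp_pos _).le)
        have h1 := Nat.floor_le hs0
        have h2 := Nat.lt_floor_add_one s
        nlinarith
      have herr : 4 * Real.exp 1 * t ^ 2 * ∑' k : ℕ, Real.exp (-(s - k) ^ 2 / 2) ≤
          Real.exp (-1) / 2 := by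
        calc _ ≤ 4 * Real.exp 1 * (1 / (4 * A)) * M := by
              have := ht z hz
              gcongr
          _ = Real.exp 1 * M / A := by field_simp
          _ ≤ Real.exp (-1) / 2 := by
              rw [Real.exp_neg, div_le_iff₀ hA0, hA]
              have he := Real.exp_pos 1
              field_simp
              nlinarith
      linarith
    · refine (hN.tsum_le_tsum hle hS1).trans ?_
      rw [tsum_mul_left]
      gcongr
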